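/- Let m, n be natural numbers with m > n, and let x > 1 be real. Then d^m/dx^m [P_n(x)·log(x−1)] = (−1)^{m+1}·(n+m)!·(m−n−1)!·(x−1)^{−m} Σ_{j=0}^{n} (−1)^j·((n+j)!/((n−j)!·(m+j)!·j!))·((x+1)/2)^j. -/

import Mathlib

open Finset Real

/-- The Legendre polynomial `P_n`, via its explicit expansion
`P_n(x) = ∑_{k=0}^{n} ((n+k)!/((k!)² (n−k)!)) ((x−1)/2)^k`. -/
noncomputable def legendreP (n : ℕ) (x : ℝ) : ℝ :=
  ∑ k ∈ Finset.range (n + 1),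
    (((n + k).factorial : ℝ) / (((k.factorial : ℝ)) ^ 2 * ((n - k).factorial : ℝ))) *
      ((x - 1) / 2) ^ k

/-- The harmonic number `H_i = ∑_{r=1}^{i} 1/r`. -/
noncomputable def harm (i : ℕ) : ℝ := ∑ r ∈ Finset.range i, (1 : ℝ) / (r + 1)

/-- The digamma function at a positive integer `j`: `ψ(j) = H_{j−1} − γ`. -/
noncomputable def psi (j : ℕ) : ℝ := harm (j - 1) - Real.eulerMascheroniConstant

lemma aux_alt (N : ℕ) : ∀ a d : ℕ,
    ∑ i ∈ Finset.range (N + 1), ((N.choose i : ℕ) : ℝ) *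
      ((-1 : ℝ) ^ i * ((a + i).factorial : ℝ) / ((a + d + 1 + i).factorial : ℝ)) =
    (a.factorial : ℝ) * ((d + N).factorial : ℝ) /
      (((a + d + 1 + N).factorial : ℝ) * (d.factorial : ℝ)) := by
  induction N with
  | zero =>
    intro a d
    have := Nat.factorial_ne_zero d
    have := Nat.factorial_ne_zero (a + d + 1)
    simp
    field_simp
  | succ N ih =>
    intro a d
    have h := Finset.sum_choose_succ_mul
      (fun i _ => (-1 : ℝ) ^ i * ((a + i).factorial : ℝ) / ((a + d + 1 + i).factorial : ℝ)) N
    rw [h, ih a d]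
    have h2 : ∑ i ∈ Finset.range (N + 1), ((N.choose i : ℕ) : ℝ) *
        ((-1 : ℝ) ^ (i + 1) * ((a + (i + 1)).factorial : ℝ) /
          ((a + d + 1 + (i + 1)).factorial : ℝ)) =
        - (((a + 1).factorial : ℝ) * ((d + N).factorial : ℝ) /
      (((a + 1 + d + 1 + N).factorial : ℝ) * (d.factorial : ℝ))) := by
      rw [← ih (a + 1) d, ← Finset.sum_neg_distrib]
      refine Finset.sum_congr rfl fun i _ => ?_
      rw [show a + (i + 1) = a + 1 + i by ring, show a + d + 1 + (i + 1) = a + 1 + d + 1 + i by ring]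
      ring
    rw [h2, show a + 1 + d + 1 + N = (a + d + 1 + N) + 1 by ring,
      show a + d + 1 + (N + 1) = (a + d + 1 + N) + 1 by ring, ← add_assoc d N 1]
    simp only [Nat.factorial_succ]
    have h3 : (d.factorial : ℝ) ≠ 0 := by exact_mod_cast Nat.factorial_ne_zero d
    have h4 : ((a + d + 1 + N).factorial : ℝ) ≠ 0 := by exact_mod_cast Nat.factorial_ne_zero _
    have h5 : ((a : ℝ) + d + 1 + N + 1) ≠ 0 := by positivity
    push_cast
    field_simp
    ring

lemma aux_deriv (k : ℕ) : ∀ (d : ℕ) (t : ℝ), 0 < t →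
    iteratedDeriv (k + 1 + d) (fun y => y ^ k * Real.log y) t =
      (-1 : ℝ) ^ d * (k.factorial : ℝ) * (d.factorial : ℝ) / t ^ (d + 1) := by
  induction k with
  | zero =>
    intro d t ht
    have h : (fun y : ℝ => y ^ 0 * Real.log y) = Real.log := by ext; simp
    rw [h, show 0 + 1 + d = d + 1 by ring, iteratedDeriv_succ', Real.deriv_log',
      iteratedDeriv_eq_iterate]
    have h := iter_deriv_inv d t
    rw [h,
      show (-1 - (d : ℤ)) = -((d + 1 : ℕ) : ℤ) by push_cast; ring, zpow_neg, zpow_natCast]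
    simp [div_eq_mul_inv]
  | succ k ih =>
    intro d t ht
    rw [show k + 1 + 1 + d = (k + 1 + d) + 1 by ring, iteratedDeriv_succ']
    have hev : deriv (fun y : ℝ => y ^ (k + 1) * Real.log y) =ᶠ[nhds t]
        fun y => ((k : ℝ) + 1) * (y ^ k * Real.log y) + y ^ k := by
      filter_upwards [lt_mem_nhds ht] with y hy
      have := ((hasDerivAt_pow (k + 1) y).mul (Real.hasDerivAt_log hy.ne')).deriv
      refine Eq.trans this ?_
      have := hy.ne'
      push_cast
      field_simp
      ring
    rw [hev.iteratedDeriv_eq]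
    have hp : ContDiffAt ℝ ((k + 1 + d : ℕ) : WithTop ℕ∞) (fun y : ℝ => y ^ k) t := by fun_prop
    have hl : ContDiffAt ℝ ((k + 1 + d : ℕ) : WithTop ℕ∞) Real.log t :=
      Real.contDiffAt_log.2 ht.ne'
    rw [iteratedDeriv_fun_add (contDiffAt_const.mul (hp.mul hl)) hp,
      iteratedDeriv_const_mul_field, ih d t ht, iteratedDeriv_pow,
      Nat.descFactorial_of_lt (by omega), Nat.factorial_succ]
    push_cast
    ring

lemma aux_poly (n d : ℕ) (u : ℝ) :
    ((n + (n + 1 + d)).factorial : ℝ) * (d.factorial : ℝ) *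
      ∑ j ∈ Finset.range (n + 1), (-1 : ℝ) ^ j * ((n + j).factorial : ℝ) /
              (((n - j).factorial : ℝ) * ((n + 1 + d + j).factorial : ℝ) * (j.factorial : ℝ)) *
            (u + 1) ^ j =
    ∑ k ∈ Finset.range (n + 1), (-1 : ℝ) ^ k * ((n + k).factorial : ℝ) *
      ((n + d - k).factorial : ℝ) / ((k.factorial : ℝ) * ((n - k).factorial : ℝ)) * u ^ k := by
  have hexp : ∀ j ∈ Finset.range (n + 1), (u + 1) ^ j =
      ∑ k ∈ Finset.range (n + 1), ((j.choose k : ℕ) : ℝ) * u ^ k := by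
    intro j hj
    rw [add_pow]
    rw [Finset.mem_range] at hj
    have : Finset.range (j + 1) ⊆ Finset.range (n + 1) := by
      intro a; simp only [Finset.mem_range]; omega
    rw [← Finset.sum_subset this]
    · refine Finset.sum_congr rfl fun k _ => ?_
      simp; ring
    · intro k _ hk
      rw [Finset.mem_range] at hk
      rw [Nat.choose_eq_zero_of_lt (by omega)]; simp
  rw [Finset.sum_congr rfl fun j hj => by rw [hexp j hj, Finset.mul_sum], Finset.sum_comm,
    Finset.mul_sum]
  refine Finset.sum_congr rfl fun k hk => ?_
  rw [Finset.mem_range] at hk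
  obtain ⟨N, rfl⟩ : ∃ N, n = k + N := ⟨n - k, by omega⟩
  rw [add_assoc k N 1, Finset.sum_range_add]
  rw [Finset.sum_eq_zero (s := Finset.range k), zero_add]
  swap
  · intro j hj
    rw [Finset.mem_range] at hj
    rw [Nat.choose_eq_zero_of_lt hj]; simp
  have key := aux_alt N (k + N + k) d
  have hN : (N.factorial : ℝ) ≠ 0 := by exact_mod_cast Nat.factorial_ne_zero _
  have hk' : (k.factorial : ℝ) ≠ 0 := by exact_mod_cast Nat.factorial_ne_zero _
  have hd' : (d.factorial : ℝ) ≠ 0 := by exact_mod_cast Nat.factorial_ne_zero _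
  have e : ∀ i ∈ Finset.range (N + 1),
      (-1 : ℝ) ^ (k + i) * ((k + N + (k + i)).factorial : ℝ) /
        (((k + N - (k + i)).factorial : ℝ) * ((k + (N + 1) + d + (k + i)).factorial : ℝ) *
          ((k + i).factorial : ℝ)) * ((((k + i).choose k : ℕ) : ℝ) * u ^ k) =
      ((-1) ^ k * u ^ k / (k.factorial * N.factorial)) * (((N.choose i : ℕ) : ℝ) *
      ((-1 : ℝ) ^ i * ((k + N + k + i).factorial : ℝ) /
        ((k + N + k + d + 1 + i).factorial : ℝ))) := by
    intro i hi
    rw [Finset.mem_range] at hi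
    have c1 := Nat.choose_mul_factorial_mul_factorial (show k ≤ k + i by omega)
    have c2 := Nat.choose_mul_factorial_mul_factorial (show i ≤ N by omega)
    rw [show k + i - k = i by omega] at c1
    rw [show k + N - (k + i) = N - i by omega,
      show k + (N + 1) + d + (k + i) = k + N + k + d + 1 + i by ring,
      show k + N + (k + i) = k + N + k + i by ring, ← c1, ← c2, pow_add]
    have hi' : (i.factorial : ℝ) ≠ 0 := by exact_mod_cast Nat.factorial_ne_zero _
    have hNi : ((N - i).factorial : ℝ) ≠ 0 := by exact_mod_cast Nat.factorial_ne_zero _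
    have hc1 : (((k + i).choose k : ℕ) : ℝ) ≠ 0 := by
      exact_mod_cast (Nat.choose_pos (show k ≤ k + i by omega)).ne'
    have hc2 : ((N.choose i : ℕ) : ℝ) ≠ 0 := by
      exact_mod_cast (Nat.choose_pos (show i ≤ N by omega)).ne'
    have hb : ((k + N + k + d + 1 + i).factorial : ℝ) ≠ 0 := by
      exact_mod_cast Nat.factorial_ne_zero _
    push_cast
    field_simp
  rw [Finset.sum_congr rfl e, ← Finset.mul_sum, key,
    show k + N + (k + (N + 1) + d) = k + N + k + d + 1 + N by ring,
    show k + N + d - k = d + N by omega, show k + N - k = N by omega]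
  have hb : ((k + N + k + d + 1 + N).factorial : ℝ) ≠ 0 := by
      exact_mod_cast Nat.factorial_ne_zero _
  field_simp

theorem stmt_11 (m n : ℕ) (hmn : n < m) (x : ℝ) (hx : 1 < x) :
    iteratedDeriv m (fun y => legendreP n y * Real.log (y - 1)) x =
      (-1 : ℝ) ^ (m + 1) * ((n + m).factorial : ℝ) * ((m - n - 1).factorial : ℝ) *
        (x - 1) ^ (-(m : ℤ)) *
        ∑ j ∈ Finset.range (n + 1),
          (-1 : ℝ) ^ j * ((n + j).factorial : ℝ) /
              (((n - j).factorial : ℝ) * ((m + j).factorial : ℝ) * (j.factorial : ℝ)) *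
            ((x + 1) / 2) ^ j := by
  obtain ⟨d, rfl⟩ : ∃ d, m = n + 1 + d := ⟨m - n - 1, by omega⟩
  have ht : 0 < x - 1 := by linarith
  have key := aux_poly n d ((x - 1) / 2)
  rw [show (x - 1) / 2 + 1 = (x + 1) / 2 by ring] at key
  rw [show n + 1 + d - n - 1 = d by omega]
  have hR : ∀ (s A B C D : ℝ), s * A * B * C * D = s * C * (A * B * D) := by intros; ring
  rw [hR, key]
  have hfun : (fun y => legendreP n y * Real.log (y - 1)) = fun y =>
      (fun t : ℝ => ∑ k ∈ Finset.range (n + 1),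
        (((n + k).factorial : ℝ) / (((k.factorial : ℝ)) ^ 2 * ((n - k).factorial : ℝ)) / 2 ^ k) *
          (t ^ k * Real.log t)) (y - 1) := by
    ext y
    simp only [legendreP, Finset.sum_mul, div_pow]
    refine Finset.sum_congr rfl fun k _ => ?_
    ring
  rw [hfun, iteratedDeriv_comp_sub_const (n + 1 + d) (fun t : ℝ => ∑ k ∈ Finset.range (n + 1),
        (((n + k).factorial : ℝ) / (((k.factorial : ℝ)) ^ 2 * ((n - k).factorial : ℝ)) / 2 ^ k) *
          (t ^ k * Real.log t)) 1]
  beta_reduce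
  have hl : ContDiffAt ℝ ((n + 1 + d : ℕ) : WithTop ℕ∞) Real.log (x - 1) :=
      Real.contDiffAt_log.2 ht.ne'
  have hp : ∀ k : ℕ, ContDiffAt ℝ ((n + 1 + d : ℕ) : WithTop ℕ∞) (fun y : ℝ => y ^ k) (x - 1) := by
    intro k; fun_prop
  rw [iteratedDeriv_fun_sum (fun k _ => contDiffAt_const.mul ((hp k).mul hl)), Finset.mul_sum]
  refine Finset.sum_congr rfl fun k hk => ?_
  rw [Finset.mem_range] at hk
  obtain ⟨N, rfl⟩ : ∃ N, n = k + N := ⟨n - k, by omega⟩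
  have hd := aux_deriv k (N + d) (x - 1) ht
  rw [show k + 1 + (N + d) = k + N + 1 + d by ring] at hd
  rw [iteratedDeriv_const_mul_field, hd, zpow_neg, zpow_natCast,
    show k + N + d - k = N + d by omega, show k + N - k = N by omega,
    show k + N + 1 + d + 1 = k + (N + d) + 2 by ring,
    show k + N + 1 + d = k + (N + d + 1) by ring]
  have hk' : (k.factorial : ℝ) ≠ 0 := by exact_mod_cast Nat.factorial_ne_zero _
  have hN : (N.factorial : ℝ) ≠ 0 := by exact_mod_cast Nat.factorial_ne_zero _
  have ht' := ht.ne'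
  have hs : (-1 : ℝ) ^ k * (-1) ^ k = 1 := by rw [← mul_pow]; simp
  have hs2 : (-1 : ℝ) ^ (k + (N + d) + 2) * (-1) ^ k = (-1) ^ (N + d) := by
    rw [pow_add, pow_add]; linear_combination (-1 : ℝ) ^ (N + d) * hs
  rw [← hs2, pow_add (x - 1) k, div_pow]
  field_simp
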